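/- arXiv:2409.01005 — 3 statements merged into one kernel-verified Lean document; each statement's English description precedes it below -/
import Mathlib

section
/- (Key computation in the monodromy/grading lemma for the Verlinde category.) For every 𝐦 ∈ X⁺(e) one has the exact identity of rational numbers B(rot 𝐦, rot 𝐦 + 2ρ) − B(𝐦, 𝐦 + 2ρ) − B(e·ω₁, e·ω₁ + 2ρ) = −2·M·χ(𝐦)/N. (Since the ribbon twist on the simple object L_𝐦 is η^{B(𝐦,𝐦+2ρ)} with η = exp(πi/M), and η^{−2Mχ(𝐦)/N} = ζ^{−χ(𝐦)} with ζ = exp(2πi/N), this identity yields that the double braiding of L_{eω₁} with L_𝐦 equals ζ^{−χ(𝐦)}·id.) -/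
/-!
Split `B(x,y) = S(x,y) − c(x)c(y)/N` with `S(x,y) = ∑ min(i,j) xᵢ yⱼ` and `c(x) = ∑ i xᵢ`.
Both `𝐦` and `rot 𝐦` contain the block `p = (m₁, …, m_{N−2})`, at the start and at the end
respectively. Since `min(i+1,j+1) = min(i,j) + 1`, shifting the block changes `S` and `c` only by
products of linear quantities (`minForm_succ`, `wt_succ`); dropping the last coordinate does
likewise (`minForm_castSucc`, `wt_castSucc`). The quadratic terms `S(p, p + 2ρ)` of the two
expansions cancel, and what is left is a polynomial identity in `e`, `N`, `m_{N−1}`, `∑ pᵢ` and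
`c(p)`.
-/

open Finset

/-- The rotation `rot(𝐦) = (e − Σ𝐦, m₁, …, m_{N−2})` of the cut-off weight lattice. -/
def rot (N e : ℕ) (m : Fin (N - 1) → ℕ) : Fin (N - 1) → ℕ := fun i =>
  if (i : ℕ) = 0 then e - ∑ j, m j
  else m ⟨(i : ℕ) - 1, lt_of_le_of_lt (Nat.sub_le _ 1) i.isLt⟩

/-- The color (central character) `χ(𝐦) = m₁ + 2m₂ + ⋯ + (N−1)m_{N−1}`. -/
def chiN (N : ℕ) (m : Fin (N - 1) → ℕ) : ℕ := ∑ i : Fin (N - 1), ((i : ℕ) + 1) * m i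

/-- The standard invariant bilinear form of `sl_N` in the basis of fundamental weights:
`B(x,y) = ∑_{i,j} (min(i,j) − ij/N)·xᵢ·yⱼ`. -/
def Bform (N : ℕ) (x y : Fin (N - 1) → ℚ) : ℚ :=
  ∑ i : Fin (N - 1), ∑ j : Fin (N - 1),
    ((min ((i : ℕ) + 1) ((j : ℕ) + 1) : ℕ) -
        (((i : ℕ) + 1) * ((j : ℕ) + 1) : ℚ) / (N : ℚ)) * x i * y j

/-- The first part `∑ min(i,j) xᵢ yⱼ` of the invariant form (indices starting at `1`). -/
def minForm (n : ℕ) (x y : Fin n → ℚ) : ℚ :=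
  ∑ i : Fin n, ∑ j : Fin n, ((min ((i : ℕ) + 1) ((j : ℕ) + 1) : ℕ) : ℚ) * x i * y j

/-- The rational color `∑ i xᵢ` (indices starting at `1`). -/
def wt (n : ℕ) (x : Fin n → ℚ) : ℚ := ∑ i : Fin n, (((i : ℕ) : ℚ) + 1) * x i

lemma Bform_eq (n : ℕ) (x y : Fin (n + 1) → ℚ) :
    Bform (n + 2) x y = minForm (n + 1) x y - wt (n + 1) x * wt (n + 1) y / ((n : ℚ) + 2) := by
  unfold Bform minForm wt
  rw [Finset.sum_mul_sum, Finset.sum_div, ← Finset.sum_sub_distrib]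
  refine Finset.sum_congr rfl fun i _ => ?_
  rw [Finset.sum_div, ← Finset.sum_sub_distrib]
  refine Finset.sum_congr rfl fun j _ => ?_
  push_cast
  ring

lemma minForm_succ (n : ℕ) (x y : Fin (n + 1) → ℚ) :
    minForm (n + 1) x y = x 0 * y 0 + x 0 * (∑ i : Fin n, y i.succ) +
      (∑ i : Fin n, x i.succ) * y 0 + minForm n (fun i => x i.succ) (fun i => y i.succ) +
      (∑ i : Fin n, x i.succ) * (∑ i : Fin n, y i.succ) := by
  unfold minForm
  have h : ∀ i j : Fin n, ((min ((i : ℕ) + 1 + 1) ((j : ℕ) + 1 + 1) : ℕ) : ℚ) * x i.succ * y j.succ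
      = ((min ((i : ℕ) + 1) ((j : ℕ) + 1) : ℕ) : ℚ) * x i.succ * y j.succ
        + x i.succ * y j.succ := by
    intro i j
    rw [Nat.add_min_add_right ((i : ℕ) + 1) ((j : ℕ) + 1) 1]
    push_cast
    ring
  have h1 : ∀ k : ℕ, min 1 (k + 1 + 1) = 1 := fun k => by omega
  have h2 : ∀ k : ℕ, min (k + 1 + 1) 1 = 1 := fun k => by omega
  simp only [Fin.sum_univ_succ, Fin.val_succ, Fin.val_zero, h, Finset.sum_add_distrib, zero_add,
    h1, h2, min_self, Nat.cast_one, one_mul, Finset.mul_sum, Finset.sum_mul]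
  rw [Finset.sum_comm (f := fun (i j : Fin n) => x j.succ * y i.succ)]
  ring

lemma minForm_castSucc (n : ℕ) (x y : Fin (n + 1) → ℚ) :
    minForm (n + 1) x y = minForm n (fun i => x i.castSucc) (fun i => y i.castSucc) +
      wt n (fun i => x i.castSucc) * y (Fin.last n) +
      x (Fin.last n) * wt n (fun i => y i.castSucc) +
      ((n : ℚ) + 1) * x (Fin.last n) * y (Fin.last n) := by
  unfold minForm wt
  have h1 : ∀ i : Fin n, min ((i : ℕ) + 1) (n + 1) = (i : ℕ) + 1 := fun i => by omega
  have h2 : ∀ i : Fin n, min (n + 1) ((i : ℕ) + 1) = (i : ℕ) + 1 := fun i => by omega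
  simp only [Fin.sum_univ_castSucc, Fin.val_castSucc, Fin.val_last, Finset.sum_add_distrib,
    h1, h2, min_self, Nat.cast_add, Nat.cast_one, Finset.mul_sum, Finset.sum_mul]
  have h3 : ∑ i : Fin n, ((i : ℕ) + 1 : ℚ) * x (Fin.last n) * y i.castSucc
      = ∑ i : Fin n, x (Fin.last n) * (((i : ℕ) + 1 : ℚ) * y i.castSucc) :=
    Finset.sum_congr rfl fun i _ => by ring
  rw [h3]
  ring

lemma wt_succ (n : ℕ) (x : Fin (n + 1) → ℚ) :
    wt (n + 1) x = x 0 + wt n (fun i => x i.succ) + ∑ i : Fin n, x i.succ := by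
  unfold wt
  rw [Fin.sum_univ_succ, add_assoc, ← Finset.sum_add_distrib]
  simp only [Fin.val_succ, Fin.val_zero]
  push_cast
  congr 1
  · ring
  · exact Finset.sum_congr rfl fun i _ => by ring

lemma wt_castSucc (n : ℕ) (x : Fin (n + 1) → ℚ) :
    wt (n + 1) x = wt n (fun i => x i.castSucc) + ((n : ℚ) + 1) * x (Fin.last n) := by
  unfold wt
  rw [Fin.sum_univ_castSucc]
  simp

lemma wt_add_two (n : ℕ) (x : Fin n → ℚ) :
    wt n (fun i => x i + 2) = wt n x + (n : ℚ) * (n + 1) := by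
  induction n with
  | zero => simp [wt]
  | succ n ih =>
    rw [wt_castSucc, wt_castSucc, ih]
    push_cast
    ring

/-- The identity for rational vectors of length `n + 1 = N − 1`, where `r` is `x` rotated. No sign
or integrality condition is needed. -/
lemma Bform_rotate (n : ℕ) (e : ℚ) (x r : Fin (n + 1) → ℚ)
    (hr0 : r 0 = e - ∑ i, x i) (hrs : ∀ i : Fin n, r i.succ = x i.castSucc) :
    Bform (n + 2) r (fun i : Fin (n + 1) => r i + 2) -
      Bform (n + 2) x (fun i : Fin (n + 1) => x i + 2) -
      Bform (n + 2) (fun i : Fin (n + 1) => if (i : ℕ) = 0 then e else 0)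
        (fun i : Fin (n + 1) => (if (i : ℕ) = 0 then e else 0) + 2) =
      -2 * (e + (n + 2)) * wt (n + 1) x / ((n : ℚ) + 2) := by
  rw [Fin.sum_univ_castSucc] at hr0
  rw [Bform_eq, Bform_eq, Bform_eq]
  -- `r` and `eω₁` are split at the first coordinate, `x` at the last one.
  rw [minForm_succ n r, minForm_castSucc n x,
    minForm_succ n (fun i => if (i : ℕ) = 0 then e else 0)]
  rw [wt_add_two _ r, wt_add_two _ x,
    wt_add_two _ (fun i : Fin (n + 1) => if (i : ℕ) = 0 then e else 0),
    wt_add_two _ (fun i : Fin n => x i.castSucc)]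
  rw [wt_succ n r, wt_castSucc n x, wt_succ n (fun i => if (i : ℕ) = 0 then e else 0)]
  have hz : wt n (fun _ => 0) = 0 := by simp [wt]
  have hz' : ∀ y, minForm n (fun _ => 0) y = 0 := fun y => by simp [minForm]
  simp only [hrs, hr0, Fin.val_succ, Fin.val_zero, if_true, Nat.succ_ne_zero,
    if_false, hz, hz', Finset.sum_add_distrib, Finset.sum_const, Finset.card_univ,
    Fintype.card_fin, nsmul_eq_mul]
  have hn : (n : ℚ) + 2 ≠ 0 := by positivity
  push_cast
  field_simp
  ring

/-- Key computation in the monodromy/grading lemma for the Verlinde category: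
`B(rot 𝐦, rot 𝐦 + 2ρ) − B(𝐦, 𝐦 + 2ρ) − B(eω₁, eω₁ + 2ρ) = −2·M·χ(𝐦)/N` in `ℚ`,
where `ρ = (1,…,1)` and `ω₁ = (1,0,…,0)`. -/
theorem grading_braiding_identity (N e : ℕ) (hN : 2 ≤ N) (m : Fin (N - 1) → ℕ)
    (hm : ∑ i, m i ≤ e) :
    Bform N (fun i => (rot N e m i : ℚ)) (fun i => (rot N e m i : ℚ) + 2) -
      Bform N (fun i => (m i : ℚ)) (fun i => (m i : ℚ) + 2) -
      Bform N (fun i => if (i : ℕ) = 0 then (e : ℚ) else 0)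
        (fun i => (if (i : ℕ) = 0 then (e : ℚ) else 0) + 2) =
      -2 * ((e + N : ℕ) : ℚ) * (chiN N m : ℚ) / (N : ℚ) := by
  obtain ⟨n, rfl⟩ : ∃ n, N = n + 2 := ⟨N - 2, by omega⟩
  change Fin (n + 1) → ℕ at m
  change ∑ i : Fin (n + 1), m i ≤ e at hm
  have hchi : (chiN (n + 2) m : ℚ) = wt (n + 1) (fun i => (m i : ℚ)) := by
    unfold chiN wt
    push_cast
    rfl
  have hr0 : ((rot (n + 2) e m (0 : Fin (n + 1)) : ℕ) : ℚ)
      = e - ∑ i : Fin (n + 1), (m i : ℚ) := by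
    have h : rot (n + 2) e m (0 : Fin (n + 1)) = e - ∑ i : Fin (n + 1), m i := rfl
    -- `hm` makes the truncated subtraction in `rot` an honest one.
    rw [h, Nat.cast_sub hm]
    push_cast
    rfl
  have h := Bform_rotate n (e : ℚ) (fun i => (m i : ℚ))
    (fun i : Fin (n + 1) => (rot (n + 2) e m i : ℚ)) hr0 (fun i => rfl)
  rw [hchi]
  push_cast
  exact h
end

section
/- (Lemma: complementary-minor identity for the discrete Fourier transform matrix.) For all strictly increasing e-tuples 𝐢 = (i₁<⋯<i_e) and 𝐣 = (j₁<⋯<j_e) in {0,…,M−1}: det( (S_{i_r, j_s})_{1≤r,s≤e} ) = (−1)^{∑_{k=1}^{N} (ᶜi_k + ᶜj_k)} · (det S / M^N) · conj( det( (S_{ᶜi_r, ᶜj_s})_{1≤r,s≤N} ) ), where conj denotes complex conjugation. -/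
/-!
The identity is Jacobi's complementary-minor formula applied to `S⁻¹ = (1/M) · conj S`.

Suppose `A * B = 1` and split the row and column indices of `A` into two parts. Multiplying `A` by
the identity matrix whose second block column has been replaced by that of `B` turns the second
block column of `A` into that of the identity. Taking determinants expresses the upper left minor
of `A` as the determinant of the rearranged `A` times the lower right minor of `B`
(`det_minor_eq_of_mul_eq_one`).

Rearranging the rows and columns of `A` costs the signs of two shuffles. A shuffle listing the
values `v₀ < ⋯ < v_{e-1}` followed by `c₀ < ⋯ < c_{N-1}` has sign `(-1)^{∑ₖ (cₖ + e + k)}`: its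
inversions are the pairs with `vᵢ > cₖ`, and the `cₖ` values below `cₖ` are `c₀, …, c_{k-1}` and
those `vᵢ` that are not in inversion with `cₖ` (`sign_shuffle`). The terms `e + k` cancel
between the row shuffle and the column shuffle.
-/

open Finset

/-- Jacobi's complementary-minor formula, with the sign still contained in the determinant of the
rearranged matrix `A.submatrix σ τ`. -/
lemma det_minor_eq_of_mul_eq_one {m n l K : Type*} [Fintype m] [Fintype n] [Fintype l]
    [DecidableEq m] [DecidableEq n] [DecidableEq l] [CommRing K]
    (A B : Matrix l l K) (σ τ : m ⊕ n ≃ l) (h : A * B = 1) :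
    (A.submatrix (σ ∘ Sum.inl) (τ ∘ Sum.inl)).det =
      (A.submatrix σ τ).det * (B.submatrix (τ ∘ Sum.inr) (σ ∘ Sum.inr)).det := by
  have h1 : A.submatrix σ τ * B.submatrix τ σ = 1 := by
    rw [Matrix.submatrix_mul_equiv, h, Matrix.submatrix_one_equiv]
  set P := A.submatrix σ τ with hP
  set Q := B.submatrix τ σ with hQ
  have h2 : P * Matrix.fromBlocks 1 Q.toBlocks₁₂ 0 Q.toBlocks₂₂ =
      Matrix.fromBlocks P.toBlocks₁₁ 0 P.toBlocks₂₁ 1 := by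
    rw [← Matrix.fromBlocks_toBlocks P, ← Matrix.fromBlocks_toBlocks Q,
      Matrix.fromBlocks_multiply, ← Matrix.fromBlocks_one, Matrix.fromBlocks_inj] at h1
    conv_lhs => rw [← Matrix.fromBlocks_toBlocks P]
    rw [Matrix.fromBlocks_multiply, h1.2.1, h1.2.2.2]
    simp
  have h3 := congrArg Matrix.det h2
  rw [Matrix.det_mul, Matrix.det_fromBlocks_zero₂₁, Matrix.det_fromBlocks_zero₁₂,
    Matrix.det_one, Matrix.det_one, one_mul, mul_one] at h3
  exact h3.symm

/-- The sign of an `(e, N)`-shuffle, in terms of its values on the last `N` positions. -/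
lemma sign_shuffle {e N : ℕ} (σ : Equiv.Perm (Fin (e + N)))
    (hv : StrictMono fun i : Fin e => σ (Fin.castAdd N i))
    (hc : StrictMono fun k : Fin N => σ (Fin.natAdd e k)) :
    Equiv.Perm.sign σ =
      ∏ k : Fin N, ((-1 : ℤˣ) ^ (σ (Fin.natAdd e k) : ℕ) * (-1) ^ (e + (k : ℕ))) := by
  rw [σ.sign_eq_prod_prod_Iio, Fin.prod_univ_add]
  have h1 : ∏ j : Fin e, ∏ i ∈ Finset.Iio (Fin.castAdd N j),
      (if σ i < σ (Fin.castAdd N j) then (1 : ℤˣ) else -1) = 1 := by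
    refine Finset.prod_eq_one fun j _ => Finset.prod_eq_one fun i hi => if_pos ?_
    rw [Finset.mem_Iio] at hi
    have hlt : (i : ℕ) < j := hi
    exact hv (a := ⟨i, by omega⟩) hi
  rw [h1, one_mul]
  refine Finset.prod_congr rfl fun k _ => ?_
  -- The inversions ending at position `e + k` start at the `i` with `σ i > σ (e + k)`.
  have h2 : ∏ i ∈ Finset.Iio (Fin.natAdd e k),
      (if σ i < σ (Fin.natAdd e k) then (1 : ℤˣ) else -1) =
      ∏ i : Fin e, (if σ (Fin.castAdd N i) < σ (Fin.natAdd e k) then (1 : ℤˣ) else -1) := by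
    rw [← Finset.filter_gt_eq_Iio, Finset.prod_filter, Fin.prod_univ_add]
    rw [Finset.prod_eq_one (s := (Finset.univ : Finset (Fin N))), mul_one]
    · refine Finset.prod_congr rfl fun i _ => if_pos ?_
      rw [Fin.lt_def, Fin.val_castAdd, Fin.val_natAdd]
      omega
    · intro i _
      split_ifs with ha hb
      · rfl
      · exact absurd (hc (by simpa using ha)) hb
      · rfl
  have h3 : (σ (Fin.natAdd e k) : ℕ) =
      #{i : Fin e | σ (Fin.castAdd N i) < σ (Fin.natAdd e k)} + k := by
    have hcard : #{i : Fin (e + N) | σ i < σ (Fin.natAdd e k)} = (σ (Fin.natAdd e k) : ℕ) := by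
      rw [← Fin.card_Iio (σ (Fin.natAdd e k))]
      exact Finset.card_bij (fun i _ => σ i) (by simp) (by simp)
        (fun b hb => ⟨σ.symm b, by simpa using hb, by simp⟩)
    have hk : #{i : Fin N | σ (Fin.natAdd e i) < σ (Fin.natAdd e k)} = (k : ℕ) := by
      rw [← Fin.card_Iio k]
      congr 1
      ext i
      simpa using hc.lt_iff_lt
    rw [← hcard]
    conv_rhs => rw [← hk]
    simp only [Finset.card_filter, Fin.sum_univ_add]
  have h4 := Finset.card_filter_add_card_filter_not (s := (Finset.univ : Finset (Fin e)))
    (fun i => σ (Fin.castAdd N i) < σ (Fin.natAdd e k))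
  rw [Finset.card_univ, Fintype.card_fin] at h4
  rw [h2, Finset.prod_ite, Finset.prod_const_one, one_mul, Finset.prod_const, h3, ← pow_add]
  set x := #{i : Fin e | σ (Fin.castAdd N i) < σ (Fin.natAdd e k)}
  set y := #{i : Fin e | ¬ σ (Fin.castAdd N i) < σ (Fin.natAdd e k)}
  have h5 : x + k + (e + k) = y + 2 * (x + k) := by omega
  rw [h5, pow_add, pow_mul]
  simp

/-- Two complementary increasing tuples list every index exactly once. -/
lemma exists_sumEquiv {e N : ℕ} (v : Fin e → Fin (e + N)) (c : Fin N → Fin (e + N))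
    (hv : Function.Injective v) (hc : Function.Injective c)
    (h : ∀ a, a ∈ Set.range c ↔ a ∉ Set.range v) :
    ∃ σ : Fin e ⊕ Fin N ≃ Fin (e + N), σ ∘ Sum.inl = v ∧ σ ∘ Sum.inr = c := by
  have hinj : Function.Injective (Sum.elim v c) :=
    hv.sumElim hc fun a b hab => (h (c b)).1 ⟨b, rfl⟩ ⟨a, hab⟩
  refine ⟨Equiv.ofBijective (Sum.elim v c)
    ((Fintype.bijective_iff_injective_and_card _).2 ⟨hinj, by simp⟩), ?_, ?_⟩ <;> rfl

/-- The determinant of a matrix whose rows and columns are rearranged by two shuffles. -/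
lemma det_submatrix_shuffle {e N : ℕ} {K : Type*} [CommRing K]
    (A : Matrix (Fin (e + N)) (Fin (e + N)) K) (σ τ : Fin e ⊕ Fin N ≃ Fin (e + N))
    (hσv : StrictMono (σ ∘ Sum.inl)) (hσc : StrictMono (σ ∘ Sum.inr))
    (hτv : StrictMono (τ ∘ Sum.inl)) (hτc : StrictMono (τ ∘ Sum.inr)) :
    (A.submatrix σ τ).det =
      (-1) ^ (∑ k : Fin N, ((σ (Sum.inr k) : ℕ) + (τ (Sum.inr k) : ℕ))) * A.det := by
  let f : Fin e ⊕ Fin N ≃ Fin (e + N) := finSumFinEquiv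
  have hA : A.submatrix σ τ =
      ((A.submatrix (f.symm.trans σ) id).submatrix id (f.symm.trans τ)).submatrix f f := by
    ext i j
    simp
  have hs : Equiv.Perm.sign (f.symm.trans σ) * Equiv.Perm.sign (f.symm.trans τ) =
      (-1) ^ (∑ k : Fin N, ((σ (Sum.inr k) : ℕ) + (τ (Sum.inr k) : ℕ))) := by
    have hfl : ∀ i : Fin e, f.symm (Fin.castAdd N i) = Sum.inl i := fun i => by simp [f]
    have hfr : ∀ k : Fin N, f.symm (Fin.natAdd e k) = Sum.inr k := fun k => by simp [f]
    rw [sign_shuffle (f.symm.trans σ) (by simpa [hfl] using! hσv) (by simpa [hfr] using! hσc),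
      sign_shuffle (f.symm.trans τ) (by simpa [hfl] using! hτv) (by simpa [hfr] using! hτc),
      ← Finset.prod_mul_distrib, ← Finset.prod_pow_eq_pow_sum]
    refine Finset.prod_congr rfl fun k _ => ?_
    simp only [Equiv.trans_apply, hfr]
    rw [mul_mul_mul_comm, Int.units_mul_self, mul_one, pow_add]
  rw [hA, Matrix.det_submatrix_equiv_self, Matrix.det_permute', Matrix.det_permute, ← mul_assoc,
    mul_comm ((Equiv.Perm.sign (f.symm.trans τ) : ℤ) : K), ← Int.cast_mul, ← Units.val_mul, hs]
  simp

/-- `S⁻¹ = (1/M) · conj S`, by summing geometric series of `M`-th roots of unity. -/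
lemma dft_mul_conj {M : ℕ} (hM : M ≠ 0) (η : ℂ)
    (hη : η = Complex.exp ((Real.pi : ℂ) * Complex.I / (M : ℂ)))
    (S : Matrix (Fin M) (Fin M) ℂ)
    (hS : ∀ a b : Fin M, S a b = η ^ (-(2 * (a : ℤ) * (b : ℤ)))) :
    S * ((M : ℂ)⁻¹ • S.map (starRingEnd ℂ)) = 1 := by
  have hMC : (M : ℂ) ≠ 0 := Nat.cast_ne_zero.2 hM
  have hη0 : η ≠ 0 := hη ▸ Complex.exp_ne_zero _
  have hconj : (starRingEnd ℂ) η = η⁻¹ := by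
    rw [hη, ← Complex.exp_conj, ← Complex.exp_neg]
    congr 1
    simp [neg_div]
  have hprim : IsPrimitiveRoot (η ^ 2) M := by
    have h := Complex.isPrimitiveRoot_exp M hM
    rw [hη, ← Complex.exp_nat_mul]
    convert h using 2
    push_cast
    ring
  ext a c
  rw [Matrix.mul_smul, Matrix.smul_apply, Matrix.mul_apply, smul_eq_mul]
  have hterm : ∀ b : Fin M, S a b * S.map (starRingEnd ℂ) b c =
      ((η ^ 2) ^ ((c : ℤ) - a)) ^ (b : ℕ) := by
    intro b
    rw [Matrix.map_apply, hS, hS, map_zpow₀, hconj, inv_zpow', ← zpow_add₀ hη0, ← zpow_natCast η 2,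
      ← zpow_mul, ← zpow_natCast, ← zpow_mul]
    congr 1
    push_cast
    ring
  simp_rw [hterm]
  rw [Fin.sum_univ_eq_sum_range (fun b => ((η ^ 2) ^ ((c : ℤ) - a)) ^ b)]
  by_cases hac : a = c
  · subst hac
    simp [hMC]
  · have hw1 : (η ^ 2) ^ ((c : ℤ) - a) ≠ 1 := by
      rw [Ne, hprim.zpow_eq_one_iff_dvd]
      intro hd
      have h0 := Int.eq_zero_of_abs_lt_dvd hd (by rw [abs_lt]; omega)
      exact hac (Fin.ext (by omega))
    have hwM : ((η ^ 2) ^ ((c : ℤ) - a)) ^ M = 1 := by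
      rw [← zpow_natCast, zpow_comm, zpow_natCast, hprim.pow_eq_one, one_zpow]
    rw [Matrix.one_apply_ne hac, geom_sum_eq hw1, hwM]
    simp

/-- Complementary-minor identity for the discrete Fourier transform matrix
`S_{a,b} = η^{−2ab}`, `η = exp(πi/M)`: for strictly increasing `e`-tuples `𝐢, 𝐣` in
`{0,…,M−1}` with complements enumerated by the strictly increasing `N`-tuples `ᶜ𝐢, ᶜ𝐣`
(`N = M − e`),
`det(S_{𝐢,𝐣}) = (−1)^{∑ₖ(ᶜiₖ+ᶜjₖ)} · (det S / M^N) · conj(det(S_{ᶜ𝐢,ᶜ𝐣}))`. -/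
theorem dft_complementary_minor (M e N : ℕ) (hM : 1 ≤ M) (he : e ≤ M) (hN : N = M - e)
    (η : ℂ) (hη : η = Complex.exp ((Real.pi : ℂ) * Complex.I / (M : ℂ)))
    (S : Matrix (Fin M) (Fin M) ℂ)
    (hS : ∀ a b : Fin M, S a b = η ^ (-(2 * (a : ℤ) * (b : ℤ))))
    (vI vJ : Fin e → Fin M) (hI : StrictMono vI) (hJ : StrictMono vJ)
    (cI cJ : Fin N → Fin M) (hcI : StrictMono cI) (hcJ : StrictMono cJ)
    (hcIr : ∀ a : Fin M, a ∈ Set.range cI ↔ a ∉ Set.range vI)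
    (hcJr : ∀ a : Fin M, a ∈ Set.range cJ ↔ a ∉ Set.range vJ) :
    Matrix.det (Matrix.of fun r s : Fin e => S (vI r) (vJ s)) =
      (-1 : ℂ) ^ (∑ k : Fin N, ((cI k : ℕ) + (cJ k : ℕ))) * (S.det / (M : ℂ) ^ N) *
        (starRingEnd ℂ) (Matrix.det (Matrix.of fun r s : Fin N => S (cI r) (cJ s))) := by
  obtain rfl : M = e + N := by omega
  obtain ⟨σ, hσv, hσc⟩ := exists_sumEquiv vI cI hI.injective hcI.injective hcIr
  obtain ⟨τ, hτv, hτc⟩ := exists_sumEquiv vJ cJ hJ.injective hcJ.injective hcJr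
  have hinv := dft_mul_conj (by omega) η hη S hS
  have hmain := det_minor_eq_of_mul_eq_one _ _ σ τ hinv
  rw [det_submatrix_shuffle S σ τ (hσv ▸ hI) (hσc ▸ hcI) (hτv ▸ hJ) (hτc ▸ hcJ),
    hσv, hσc, hτv, hτc] at hmain
  have hσ' : ∀ k, σ (Sum.inr k) = cI k := congrFun hσc
  have hτ' : ∀ k, τ (Sum.inr k) = cJ k := congrFun hτc
  simp only [hσ', hτ'] at hmain
  -- `S` is symmetric, so the complementary minor of `S⁻¹` is the transpose of the one wanted.
  have hB : (((e + N : ℕ) : ℂ)⁻¹ • S.map (starRingEnd ℂ)).submatrix cJ cI =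
      ((e + N : ℕ) : ℂ)⁻¹ •
        ((Matrix.of fun r s : Fin N => S (cI r) (cJ s)).map (starRingEnd ℂ)).transpose := by
    ext r s
    simp only [Matrix.submatrix_apply, Matrix.smul_apply, Matrix.map_apply,
      Matrix.transpose_apply, Matrix.of_apply, hS]
    congr 4
    ring
  have hdet : ((Matrix.of fun r s : Fin N => S (cI r) (cJ s)).map (starRingEnd ℂ)).det =
      (starRingEnd ℂ) (Matrix.of fun r s : Fin N => S (cI r) (cJ s)).det :=
    ((starRingEnd ℂ).map_det _).symm
  rw [hB, Matrix.det_smul, Matrix.det_transpose, hdet, Fintype.card_fin, inv_pow] at hmain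
  refine hmain.trans ?_
  ring
end

section
/- (Combinatorial core of the lemma on constant terms of the sl_N Chebyshev polynomials.) Every 𝐦 ∈ ℤ_{≥0}^{N−1} with m₁+⋯+m_{N−1} = e+1 admits two indices 1 ≤ j < j' ≤ N with s_j(𝐦) ≡ s_{j'}(𝐦) (mod N), if and only if e ≡ 0 (mod N). Via Beerends's residue criterion this says: all Chebyshev polynomials p_𝐦 for sl_N with |𝐦| = e+1 have zero constant term if and only if e ≡ 0 mod N. -/
/-!
Since `s_1 = e + N` and `s_N = 0`, the indices `1` and `N` collide modulo `N` whenever `N ∣ e`.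

Conversely, let `r = e % N` be nonzero, and take `𝐦` to be `e` at the first index plus `1` at the
index `N - r`. Then `s_1 = e + N ≡ r`, while `s_2 > ⋯ > s_N` run through `{0, …, N - 1} ∖ {r}`:
the extra `1` makes the sequence skip `r`, jumping from `r + 1` to `r - 1` (when `r = N - 1`, already
`s_2 = r - 1`). Hence all residues are distinct.
-/

open Finset

/-- `s_j(𝐦) = m_j + m_{j+1} + ⋯ + m_{N−1} + (N − j)` for `1 ≤ j ≤ N` (so `s_N(𝐦) = 0`). -/
def sfun (N : ℕ) (m : Fin (N - 1) → ℕ) (j : ℕ) : ℕ :=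
  (∑ t : Fin (N - 1), if j ≤ (t : ℕ) + 1 then m t else 0) + (N - j)

/-- A vector with no collision of residues when `N ∤ e`: `e` at the first index plus `1` at the
index `N - e % N`. The position `t : Fin (N - 1)` stands for the index `t + 1`. -/
def witness (N e : ℕ) (t : Fin (N - 1)) : ℕ :=
  (if (t : ℕ) = 0 then e else 0) + (if (t : ℕ) + 1 = N - e % N then 1 else 0)

lemma sum_ite_val_eq {n k : ℕ} (hk : k < n) (c : ℕ) :
    (∑ t : Fin n, if (t : ℕ) = k then c else 0) = c := by
  have h : ∀ t : Fin n, ((t : ℕ) = k) = (t = ⟨k, hk⟩) := fun t => by simp [Fin.ext_iff]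
  simp [h]

lemma sum_witness {N e : ℕ} (hN : 2 ≤ N) (hr : e % N ≠ 0) :
    ∑ t, witness N e t = e + 1 := by
  have hlt : e % N < N := Nat.mod_lt _ (by omega)
  have h : ∀ t : Fin (N - 1), ((t : ℕ) + 1 = N - e % N) = ((t : ℕ) = N - e % N - 1) :=
    fun t => propext (by omega)
  simp only [witness, sum_add_distrib, h]
  rw [sum_ite_val_eq (by omega), sum_ite_val_eq (by omega)]

lemma sfun_witness {N e : ℕ} (hN : 2 ≤ N) (hr : e % N ≠ 0) (j : ℕ) :
    sfun N (witness N e) j =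
      (if j ≤ 1 then e else 0) + (if j ≤ N - e % N then 1 else 0) + (N - j) := by
  have hlt : e % N < N := Nat.mod_lt _ (by omega)
  have h : ∀ t : Fin (N - 1), (if j ≤ (t : ℕ) + 1 then witness N e t else 0) =
      (if (t : ℕ) = 0 then (if j ≤ 1 then e else 0) else 0) +
      (if (t : ℕ) = N - e % N - 1 then (if j ≤ N - e % N then 1 else 0) else 0) := by
    intro t
    unfold witness
    split_ifs <;> omega
  simp only [sfun, h, sum_add_distrib]
  rw [sum_ite_val_eq (by omega), sum_ite_val_eq (by omega)]

/-- Combinatorial core of the lemma on constant terms of the `sl_N` Chebyshev polynomials: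
every `𝐦` with `Σ𝐦 = e+1` admits `1 ≤ j < j' ≤ N` with `s_j(𝐦) ≡ s_{j'}(𝐦) (mod N)`,
if and only if `N ∣ e`. -/
theorem chebyshev_constant_term (N e : ℕ) (hN : 2 ≤ N) :
    (∀ m : Fin (N - 1) → ℕ, (∑ i, m i) = e + 1 →
        ∃ j j' : ℕ, 1 ≤ j ∧ j < j' ∧ j' ≤ N ∧ sfun N m j ≡ sfun N m j' [MOD N]) ↔
      N ∣ e := by
  constructor
  · intro h
    by_contra hd
    have hr : e % N ≠ 0 := fun h0 => hd (Nat.dvd_of_mod_eq_zero h0)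
    have hlt : e % N < N := Nat.mod_lt _ (by omega)
    obtain ⟨j, j', h1, h2, h3, hmod⟩ := h (witness N e) (sum_witness hN hr)
    rw [sfun_witness hN hr, sfun_witness hN hr, Nat.ModEq] at hmod
    rw [if_neg (by omega : ¬ j' ≤ 1), zero_add] at hmod
    -- Every index beyond the first gives a value below `N`, hence its own residue.
    rw [Nat.mod_eq_of_lt (a := _ + (N - j')) (by split_ifs <;> omega)] at hmod
    by_cases hj : j = 1
    · subst hj
      rw [if_pos le_rfl, if_pos (by omega), show e + 1 + (N - 1) = e + N by omega,
        Nat.add_mod_right] at hmod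
      split_ifs at hmod <;> omega
    · rw [if_neg (by omega : ¬ j ≤ 1), zero_add,
        Nat.mod_eq_of_lt (by split_ifs <;> omega)] at hmod
      split_ifs at hmod <;> omega
  · intro hd m hm
    refine ⟨1, N, le_rfl, by omega, le_rfl, ?_⟩
    have hs1 : sfun N m 1 = e + N := by
      simp only [sfun, Nat.le_add_left, if_true, hm]
      omega
    have hsN : sfun N m N = 0 := by
      have h : ∀ t : Fin (N - 1), ¬ N ≤ (t : ℕ) + 1 := fun t => by omega
      simp [sfun, h]
    rw [hs1, hsN]
    exact (Nat.modEq_zero_iff_dvd).2 (hd.add dvd_rfl)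
end
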